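/- arXiv:1812.06886 — 8 statements merged into one kernel-verified Lean document; each statement's English description precedes it below -/
import Mathlib

section
/- There exist 6 mutually orthogonal Latin squares of order 35; that is, N(35) ≥ 6. -/
/-- A Latin square of order `n`: every row map and every column map is a bijection. -/
def IsLatinSquare {n : ℕ} (L : Fin n → Fin n → Fin n) : Prop :=
  (∀ i, Function.Bijective fun j => L i j) ∧ (∀ j, Function.Bijective fun i => L i j)

/-- Two squares are orthogonal if the superposition map is injective. -/
def IsOrthogonal {n : ℕ} (L₁ L₂ : Fin n → Fin n → Fin n) : Prop :=
  Function.Injective fun p : Fin n × Fin n => (L₁ p.1 p.2, L₂ p.1 p.2)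

/-- The six non-zero rows of a normalized (35, 7; 1)-difference matrix over `ℤ/35`. -/
def diffRows : Fin 6 → Fin 35 → Fin 35 :=
  ![![0, 1, 17, 12, 2, 32, 6, 11, 4, 24, 31, 23, 14, 33, 25, 10, 22, 29, 28, 34, 27, 8, 15, 9, 21, 19, 20, 13, 16, 30, 18, 7, 3, 5, 26],
    ![1, 18, 29, 14, 34, 3, 6, 15, 28, 20, 19, 2, 12, 9, 0, 32, 16, 22, 27, 26, 17, 23, 24, 30, 5, 4, 33, 21, 11, 13, 25, 10, 8, 31, 7],
    ![18, 30, 31, 11, 5, 3, 7, 4, 24, 8, 33, 0, 23, 13, 22, 26, 9, 21, 19, 16, 27, 32, 10, 14, 25, 17, 6, 1, 29, 20, 28, 15, 34, 12, 2],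
    ![30, 32, 28, 17, 5, 4, 24, 0, 12, 22, 31, 11, 27, 2, 16, 19, 8, 13, 9, 26, 14, 18, 29, 34, 3, 25, 21, 10, 1, 23, 33, 6, 15, 7, 20],
    ![32, 29, 34, 17, 6, 21, 1, 23, 26, 20, 7, 15, 16, 33, 9, 18, 0, 3, 19, 13, 8, 2, 14, 12, 11, 5, 30, 31, 4, 28, 24, 22, 10, 25, 27],
    ![29, 0, 34, 18, 23, 33, 3, 2, 24, 31, 11, 4, 12, 21, 8, 10, 25, 13, 6, 7, 1, 22, 27, 20, 26, 14, 16, 15, 9, 19, 5, 17, 28, 32, 30]]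

theorem diffRows_inj : ∀ k, Function.Injective (diffRows k) := by
  decide +kernel

theorem diffRows_sub : ∀ k k', k ≠ k' →
    ∀ a b, diffRows k a - diffRows k' a = diffRows k b - diffRows k' b → a = b := by
  decide +kernel

/-- There exist 6 mutually orthogonal Latin squares of order 35, i.e. N(35) ≥ 6. -/
theorem six_MOLS_of_order_35 :
    ∃ L : Fin 6 → (Fin 35 → Fin 35 → Fin 35),
      (∀ k, IsLatinSquare (L k)) ∧
      (∀ k k', k ≠ k' → IsOrthogonal (L k) (L k')) := by
  refine ⟨fun k i j => diffRows k j + i, fun k => ⟨fun i => ?_, fun j => ?_⟩, ?_⟩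
  · apply Finite.injective_iff_bijective.mp
    intro a b h
    exact diffRows_inj k (add_right_cancel h)
  · apply Finite.injective_iff_bijective.mp
    intro a b h
    exact add_left_cancel h
  · rintro k k' hk ⟨i, j⟩ ⟨i', j'⟩ h
    simp only [Prod.mk.injEq] at h
    obtain ⟨h1, h2⟩ := h
    have hj : j = j' := by
      apply diffRows_sub k k' hk
      have h3 : (diffRows k j + i) - (diffRows k' j + i)
          = (diffRows k j' + i') - (diffRows k' j' + i') := by rw [h1, h2]
      simpa only [add_sub_add_right_eq_sub] using h3
    subst hj
    rw [add_left_cancel h1]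
end

section
/- There exist 10 mutually orthogonal Latin squares of order 48; that is, N(48) ≥ 10. -/
namespace MOLS48

/-- A `(G, 11, 1)`-difference matrix over `G = ZMod 3 × (ZMod 2)^4`;
the code `16 * a + x` stands for the element with `ZMod 3`-part `a` and bit vector `x`. -/
def tbl : List (List ℕ) :=
  [[0, 0, 0, 0, 0, 0, 0, 0, 0, 0, 0, 0, 0, 0, 0, 0, 0, 0, 0, 0, 0, 0, 0, 0, 0, 0, 0, 0, 0, 0, 0, 0, 0, 0, 0, 0, 0, 0, 0, 0, 0, 0, 0, 0, 0, 0, 0, 0],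
   [0, 1, 8, 9, 36, 37, 44, 45, 38, 39, 46, 47, 34, 35, 42, 43, 16, 17, 24, 25, 2, 3, 10, 11, 4, 5, 12, 13, 6, 7, 14, 15, 32, 33, 40, 41, 22, 23, 30, 31, 20, 21, 28, 29, 18, 19, 26, 27],
   [0, 5, 1, 4, 37, 32, 36, 33, 27, 30, 26, 31, 25, 28, 24, 29, 44, 41, 45, 40, 22, 19, 23, 18, 7, 2, 6, 3, 42, 47, 43, 46, 11, 14, 10, 15, 8, 13, 9, 12, 35, 38, 34, 39, 16, 21, 17, 20],
   [0, 3, 15, 12, 34, 33, 45, 46, 30, 29, 17, 18, 11, 8, 4, 7, 31, 28, 16, 19, 26, 25, 21, 22, 40, 43, 39, 36, 10, 9, 5, 6, 23, 20, 24, 27, 32, 35, 47, 44, 2, 1, 13, 14, 37, 38, 42, 41],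
   [0, 12, 3, 15, 43, 39, 40, 36, 11, 7, 8, 4, 29, 17, 30, 18, 1, 13, 2, 14, 42, 38, 41, 37, 28, 16, 31, 19, 23, 27, 20, 24, 44, 32, 47, 35, 34, 46, 33, 45, 9, 5, 10, 6, 26, 22, 25, 21],
   [0, 15, 12, 3, 20, 27, 24, 23, 46, 33, 34, 45, 26, 21, 22, 25, 42, 37, 38, 41, 1, 14, 13, 2, 47, 32, 35, 44, 30, 17, 18, 29, 9, 6, 5, 10, 19, 28, 31, 16, 7, 8, 11, 4, 39, 40, 43, 36],
   [0, 6, 14, 8, 21, 19, 27, 29, 41, 47, 39, 33, 12, 10, 2, 4, 5, 3, 11, 13, 16, 22, 30, 24, 20, 18, 26, 28, 43, 45, 37, 35, 42, 44, 36, 34, 15, 9, 1, 7, 23, 17, 25, 31, 40, 46, 38, 32],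
   [0, 14, 4, 10, 30, 16, 26, 20, 22, 24, 18, 28, 38, 40, 34, 44, 46, 32, 42, 36, 35, 45, 39, 41, 17, 31, 21, 27, 3, 13, 7, 9, 15, 1, 11, 5, 33, 47, 37, 43, 25, 23, 29, 19, 6, 8, 2, 12],
   [0, 2, 7, 5, 26, 24, 29, 31, 10, 8, 13, 15, 44, 46, 43, 41, 25, 27, 30, 28, 45, 47, 42, 40, 12, 14, 11, 9, 17, 19, 22, 20, 21, 23, 18, 16, 1, 3, 6, 4, 33, 35, 38, 36, 32, 34, 39, 37],
   [0, 9, 2, 11, 4, 13, 6, 15, 39, 46, 37, 44, 30, 23, 28, 21, 29, 20, 31, 22, 12, 5, 14, 7, 18, 27, 16, 25, 35, 42, 33, 40, 19, 26, 17, 24, 43, 34, 41, 32, 45, 36, 47, 38, 8, 1, 10, 3],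
   [0, 13, 11, 6, 1, 12, 10, 7, 18, 31, 25, 20, 43, 38, 32, 45, 3, 14, 8, 5, 17, 28, 26, 23, 33, 44, 42, 39, 24, 21, 19, 30, 40, 37, 35, 46, 27, 22, 16, 29, 47, 34, 36, 41, 15, 2, 4, 9]]

/-- Difference of two coded group elements. -/
def sub (m n : ℕ) : ℕ := ((m / 16 + 3 - n / 16) % 3) * 16 + ((m % 16) ^^^ (n % 16))

/-- Entry of the difference matrix. -/
def ent (k c : ℕ) : ℕ := (tbl.getD k []).getD c 0

/-- The group. -/
abbrev Grp : Type := ZMod 3 × ZMod 2 × ZMod 2 × ZMod 2 × ZMod 2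

instance : DecidableEq Grp :=
  inferInstanceAs (DecidableEq (ZMod 3 × ZMod 2 × ZMod 2 × ZMod 2 × ZMod 2))

/-- Decoding. -/
def dec (n : ℕ) : Grp :=
  (((n / 16 : ℕ) : ZMod 3), ((n / 8 : ℕ) : ZMod 2), ((n / 4 : ℕ) : ZMod 2),
    ((n / 2 : ℕ) : ZMod 2), (n : ZMod 2))

theorem dec_sub : ∀ m < 48, ∀ n < 48, dec m - dec n = dec (sub m n) := by
  decide +kernel

theorem dec_inj : ∀ m < 48, ∀ n < 48, dec m = dec n → m = n := by
  decide +kernel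

theorem sub_lt : ∀ m < 48, ∀ n < 48, sub m n < 48 := by
  decide +kernel

theorem ent_lt : ∀ k < 11, ∀ c < 48, ent k c < 48 := by
  decide +kernel

theorem ent_zero : ∀ c < 48, ent 0 c = 0 := by
  decide +kernel

theorem diff_nodup : ∀ k < 11, ∀ k' < 11, k ≠ k' →
    ((List.range 48).map fun c => sub (ent k c) (ent k' c)).Nodup := by
  decide +kernel

theorem diff_inj {k k' : ℕ} (hk : k < 11) (hk' : k' < 11) (h : k ≠ k') {c c' : ℕ}
    (hc : c < 48) (hc' : c' < 48)
    (e : dec (ent k c) - dec (ent k' c) = dec (ent k c') - dec (ent k' c')) : c = c' := by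
  rw [dec_sub _ (ent_lt k hk c hc) _ (ent_lt k' hk' c hc),
    dec_sub _ (ent_lt k hk c' hc') _ (ent_lt k' hk' c' hc')] at e
  have e2 := dec_inj _ (sub_lt _ (ent_lt k hk c hc) _ (ent_lt k' hk' c hc)) _
    (sub_lt _ (ent_lt k hk c' hc') _ (ent_lt k' hk' c' hc')) e
  exact List.inj_on_of_nodup_map (diff_nodup k hk k' hk' h)
    (List.mem_range.2 hc) (List.mem_range.2 hc') e2

theorem card_grp : Fintype.card Grp = 48 := by
  simp [ZMod.card]

/-- Numbering of the group. -/
noncomputable def num : Grp ≃ Fin 48 := Fintype.equivFinOfCardEq card_grp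

/-- The `k`-th square. -/
noncomputable def sq (k : Fin 10) (g c : Fin 48) : Fin 48 :=
  num (num.symm g + dec (ent (k + 1) c))

end MOLS48

open MOLS48

/-- There exist 10 mutually orthogonal Latin squares of order 48, i.e. N(48) ≥ 10. -/
theorem ten_MOLS_of_order_48 :
    ∃ L : Fin 10 → (Fin 48 → Fin 48 → Fin 48),
      (∀ k, IsLatinSquare (L k)) ∧
      (∀ k k', k ≠ k' → IsOrthogonal (L k) (L k')) := by
  refine ⟨sq, fun k => ⟨fun g => ?_, fun c => ?_⟩, fun k k' hkk => ?_⟩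
  · rw [← Finite.injective_iff_bijective]
    intro c c' e
    have e1 := num.injective e
    have e2 : dec (ent (k + 1) c) = dec (ent (k + 1) c') := add_left_cancel e1
    have hk := k.2
    refine Fin.ext (diff_inj (k := k + 1) (k' := 0) (by omega) (by omega) (by omega) c.2 c'.2 ?_)
    rw [e2, ent_zero _ c.2, ent_zero _ c'.2]
  · rw [← Finite.injective_iff_bijective]
    intro g g' e
    exact num.symm.injective (add_right_cancel (num.injective e))
  · rintro ⟨g, c⟩ ⟨g', c'⟩ e
    have e1 := num.injective (congrArg Prod.fst e)
    have e2 := num.injective (congrArg Prod.snd e)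
    simp only at e1 e2
    have hk := k.2
    have hk' := k'.2
    have hne : (k : ℕ) ≠ k' := fun h => hkk (Fin.ext h)
    have hc : c = c' := by
      refine Fin.ext (diff_inj (k := k + 1) (k' := k' + 1) (by omega) (by omega) (by omega)
        c.2 c'.2 ?_)
      have := congrArg₂ (· - ·) e1 e2
      simpa only [add_sub_add_left_eq_sub] using this
    subst hc
    have hg : g = g' := num.symm.injective (add_right_cancel e1)
    rw [hg]
end

section
/- There exist 8 mutually orthogonal Latin squares of order 63; that is, N(63) ≥ 8. -/
namespace MOLS63

/-- The group `Z₃ × Z₃ × Z₇` of order 63. -/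
abbrev G := ZMod 3 × ZMod 3 × ZMod 7

/-- Eight rows of a normalized `(63, 9; 1)`-difference matrix over `G` (the ninth row is zero).
The code `21 a + 7 b + c` stands for `(a, b, c)`. -/
def table : List (List ℕ) :=
  [
    [0, 1, 2, 3, 4, 5, 6, 7, 8, 9, 10, 11, 12, 13, 14, 15, 16, 17, 18, 19, 20, 21, 22, 23,
     24, 25, 26, 27, 28, 29, 30, 31, 32, 33, 34, 35, 36, 37, 38, 39, 40, 41, 42, 43, 44,
     45, 46, 47, 48, 49, 50, 51, 52, 53, 54, 55, 56, 57, 58, 59, 60, 61, 62],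
    [62, 6, 34, 32, 14, 4, 56, 52, 24, 18, 27, 53, 12, 16, 1, 39, 44, 8, 40, 42, 10, 60,
     36, 13, 47, 9, 46, 35, 31, 3, 49, 28, 59, 2, 58, 26, 51, 23, 50, 19, 17, 48, 20, 15,
     55, 38, 22, 25, 54, 30, 45, 43, 7, 11, 41, 37, 5, 21, 33, 29, 61, 0, 57],
    [23, 44, 32, 61, 29, 55, 56, 17, 57, 34, 58, 12, 51, 39, 2, 1, 37, 11, 31, 22, 4, 24,
     14, 50, 8, 15, 48, 9, 30, 7, 26, 21, 20, 10, 53, 49, 13, 41, 46, 59, 28, 40, 42, 54,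
     52, 27, 35, 60, 16, 5, 3, 6, 43, 18, 47, 0, 25, 62, 19, 38, 45, 33, 36],
    [2, 62, 26, 18, 38, 19, 13, 21, 33, 14, 57, 34, 3, 37, 48, 45, 58, 42, 47, 25, 27, 43,
     15, 12, 44, 46, 51, 4, 1, 9, 11, 35, 22, 41, 31, 61, 10, 55, 16, 39, 36, 29, 28, 17,
     40, 20, 52, 23, 7, 5, 32, 60, 50, 56, 53, 24, 8, 6, 59, 30, 49, 0, 54],
    [18, 47, 56, 62, 10, 36, 7, 35, 27, 61, 14, 5, 3, 29, 13, 44, 42, 33, 37, 60, 58, 52,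
     43, 55, 31, 54, 49, 30, 8, 34, 26, 17, 45, 2, 6, 28, 0, 38, 22, 41, 46, 12, 48, 59,
     23, 39, 19, 1, 25, 53, 20, 51, 9, 4, 50, 57, 11, 16, 32, 40, 15, 21, 24],
    [28, 8, 18, 55, 24, 45, 23, 43, 39, 50, 4, 53, 16, 15, 34, 7, 13, 29, 32, 14, 30, 57,
     19, 11, 56, 62, 31, 42, 21, 10, 5, 58, 33, 54, 60, 22, 6, 9, 3, 48, 36, 12, 37, 49,
     0, 27, 1, 59, 47, 26, 46, 41, 52, 40, 51, 17, 61, 2, 38, 35, 20, 25, 44],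
    [21, 31, 13, 52, 3, 57, 60, 23, 47, 5, 37, 11, 10, 6, 58, 61, 17, 34, 8, 42, 56, 24,
     38, 43, 53, 40, 20, 55, 59, 19, 4, 22, 41, 46, 35, 39, 2, 49, 62, 0, 45, 26, 44, 50,
     36, 18, 51, 16, 1, 33, 29, 7, 14, 12, 32, 30, 28, 27, 9, 48, 15, 25, 54],
    [55, 33, 10, 57, 15, 28, 37, 29, 14, 18, 62, 42, 38, 54, 41, 31, 34, 12, 58, 47, 43,
     24, 3, 23, 22, 0, 25, 7, 21, 9, 40, 36, 4, 45, 61, 60, 46, 44, 11, 30, 16, 8, 39, 1,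
     59, 6, 17, 19, 32, 53, 2, 52, 56, 13, 49, 26, 35, 20, 27, 51, 5, 50, 48]
  ]

/-- Decoding of a table entry. -/
def dec (c : ℕ) : G := (((c / 21 : ℕ) : ZMod 3), ((c / 7 : ℕ) : ZMod 3), (c : ZMod 7))

/-- The difference matrix. -/
def D (r : Fin 8) (j : Fin 63) : G := dec ((table.getD r.1 []).getD j.1 0)

set_option maxRecDepth 100000 in
theorem D_nodup : ∀ r : Fin 8, (List.ofFn (D r)).Nodup := by
  decide +kernel

set_option maxRecDepth 100000 in
theorem D_sub_nodup : ∀ r s : Fin 8, r ≠ s → (List.ofFn fun j => D r j - D s j).Nodup := by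
  decide +kernel

theorem D_inj (r : Fin 8) : Function.Injective (D r) := List.nodup_ofFn.1 (D_nodup r)

theorem D_sub_inj (r s : Fin 8) (h : r ≠ s) : Function.Injective fun j => D r j - D s j :=
  List.nodup_ofFn.1 (D_sub_nodup r s h)

theorem card_G : Fintype.card G = 63 := by
  simp [G, ZMod.card]

/-- A numbering of the group. -/
noncomputable def e : G ≃ Fin 63 := Fintype.equivFinOfCardEq card_G

/-- The squares. -/
noncomputable def sq (r : Fin 8) (i j : Fin 63) : Fin 63 := e (D r i + e.symm j)

theorem sq_latin (r : Fin 8) : IsLatinSquare (sq r) := by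
  refine ⟨fun i => Finite.injective_iff_bijective.1 ?_,
    fun j => Finite.injective_iff_bijective.1 ?_⟩
  · intro a b h
    have h1 := e.injective h
    exact e.symm.injective (add_left_cancel h1)
  · intro a b h
    have h1 := e.injective h
    exact D_inj r (add_right_cancel h1)

theorem sq_orth (r s : Fin 8) (hrs : r ≠ s) : IsOrthogonal (sq r) (sq s) := by
  rintro ⟨a, b⟩ ⟨a', b'⟩ h
  have h1 : D r a + e.symm b = D r a' + e.symm b' := e.injective (congrArg Prod.fst h)
  have h2 : D s a + e.symm b = D s a' + e.symm b' := e.injective (congrArg Prod.snd h)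
  have h3 : D r a - D s a = D r a' - D s a' := by
    have := congrArg₂ (fun x y => x - y) h1 h2
    simpa only [add_sub_add_right_eq_sub] using this
  have ha : a = a' := D_sub_inj r s hrs h3
  subst ha
  have hb : b = b' := e.symm.injective (add_left_cancel h1)
  rw [hb]

end MOLS63

/-- There exist 8 mutually orthogonal Latin squares of order 63, i.e. N(63) ≥ 8. -/
theorem eight_MOLS_of_order_63 :
    ∃ L : Fin 8 → (Fin 63 → Fin 63 → Fin 63),
      (∀ k, IsLatinSquare (L k)) ∧
      (∀ k k', k ≠ k' → IsOrthogonal (L k) (L k')) :=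
  ⟨MOLS63.sq, MOLS63.sq_latin, MOLS63.sq_orth⟩
end

section
/- There exist 8 mutually orthogonal Latin squares of order 96; that is, N(96) ≥ 8. -/
namespace MOLS96

/-- The group `Z_3 × Z_2^5` of order 96. -/
abbrev G : Type := Fin 3 × Fin 2 × Fin 2 × Fin 2 × Fin 2 × Fin 2

/-- `Z_3` part: a (3, 9; 4) difference matrix. -/
def zTab : List (List ℕ) :=
  [[1, 2, 1, 0, 0, 2, 0, 1, 0, 0, 1, 0],
   [1, 1, 2, 2, 0, 0, 0, 0, 1, 0, 0, 1],
   [2, 1, 1, 0, 2, 0, 1, 0, 0, 1, 0, 0],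
   [1, 0, 1, 2, 2, 0, 1, 1, 2, 2, 1, 1],
   [1, 1, 0, 0, 2, 2, 2, 1, 1, 1, 2, 1],
   [0, 1, 1, 2, 0, 2, 1, 2, 1, 1, 1, 2],
   [1, 2, 1, 2, 1, 1, 2, 2, 0, 1, 0, 1],
   [1, 1, 2, 1, 2, 1, 0, 2, 2, 1, 1, 0],
   [2, 1, 1, 1, 1, 2, 2, 0, 2, 0, 1, 1]]

/-- Base points of the `Z_2^5` part, as 5-bit numbers. -/
def aTab : List (List ℕ) :=
  [[0, 6, 16, 0, 17, 10, 0, 14, 21, 0, 24, 22],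
   [16, 0, 7, 11, 0, 18, 22, 0, 15, 23, 0, 24],
   [5, 16, 0, 19, 9, 0, 13, 23, 0, 24, 21, 0],
   [10, 4, 30, 13, 2, 31, 27, 22, 5, 4, 3, 23],
   [31, 11, 4, 29, 14, 3, 6, 25, 23, 21, 4, 1],
   [4, 29, 9, 1, 30, 15, 21, 7, 26, 2, 22, 4],
   [0, 24, 4, 11, 14, 26, 24, 23, 10, 9, 1, 22],
   [4, 0, 24, 27, 9, 15, 11, 24, 21, 23, 10, 2],
   [24, 4, 0, 13, 25, 10, 22, 9, 24, 3, 21, 11]]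

/-- Linear maps `Z_2^3 → Z_2^5`, one for each row, as lists of images of basis vectors. -/
def bTab : List (List ℕ) :=
  [[25, 19, 25],
   [11, 26, 26],
   [18, 9, 27],
   [17, 22, 30],
   [5, 18, 31],
   [21, 6, 29],
   [3, 30, 1],
   [30, 1, 2],
   [29, 31, 3]]

def get (T : List (List ℕ)) (r j : ℕ) : ℕ := (T.getD r []).getD j 0

/-- The `Z_2^5` entry in row `r` and column `c = 8 j + t`. -/
def entry (r c : ℕ) : ℕ :=
  get aTab r (c / 8) ^^^ (c % 2 * get bTab r 0) ^^^ (c / 2 % 2 * get bTab r 1) ^^^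
    (c / 4 % 2 * get bTab r 2)

def decode (z a : ℕ) : G :=
  (Fin.ofNat 3 z, Fin.ofNat 2 a, Fin.ofNat 2 (a / 2), Fin.ofNat 2 (a / 4), Fin.ofNat 2 (a / 8),
    Fin.ofNat 2 (a / 16))

/-- The (96, 9; 1) difference matrix. -/
def D (r c : ℕ) : G := decode (get zTab r (c / 8)) (entry r c)

def code (g : G) : ℕ :=
  g.1.val * 32 + g.2.1.val + 2 * g.2.2.1.val + 4 * g.2.2.2.1.val + 8 * g.2.2.2.2.1.val +
    16 * g.2.2.2.2.2.val

/-- Bit mask of the set of values of `f` on `0, …, n - 1`. -/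
def mask (f : ℕ → ℕ) : ℕ → ℕ
  | 0 => 0
  | n + 1 => mask f n ||| (1 <<< f n)

theorem mask_testBit (f : ℕ → ℕ) (n i : ℕ) (h : (mask f n).testBit i = true) :
    ∃ c < n, f c = i := by
  induction n with
  | zero => simp [mask] at h
  | succ n ih =>
    rw [mask, Nat.testBit_or, Bool.or_eq_true] at h
    rcases h with h | h
    · obtain ⟨c, hc, rfl⟩ := ih h
      exact ⟨c, by omega, rfl⟩
    · rw [Nat.one_shiftLeft, Nat.testBit_two_pow] at h
      exact ⟨n, by omega, by simpa using h⟩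

theorem inj_of_mask (f : ℕ → ℕ) (h : mask f 96 = 2 ^ 96 - 1) :
    Function.Injective fun c : Fin 96 => f c := by
  classical
  have hsub : Finset.range 96 ⊆ Finset.univ.image (fun c : Fin 96 => f c) := by
    intro i hi
    rw [Finset.mem_range] at hi
    have ht : (mask f 96).testBit i = true := by
      rw [h, Nat.testBit_two_pow_sub_one]
      simpa using hi
    obtain ⟨c, hc, rfl⟩ := mask_testBit f 96 i ht
    exact Finset.mem_image.2 ⟨⟨c, hc⟩, Finset.mem_univ _, rfl⟩
  have hcard := Finset.card_le_card hsub
  rw [Finset.card_range] at hcard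
  have hle : (Finset.univ.image (fun c : Fin 96 => f c)).card ≤ 96 := by
    simpa using Finset.card_image_le (s := (Finset.univ : Finset (Fin 96)))
      (f := fun c : Fin 96 => f c)
  have := Finset.card_image_iff.1
    (show (Finset.univ.image (fun c : Fin 96 => f c)).card = (Finset.univ : Finset (Fin 96)).card
      by rw [Finset.card_univ, Fintype.card_fin]; omega)
  intro x y hxy
  exact this (by simp) (by simp) hxy

theorem masks : ∀ r s : Fin 9, r ≠ s →
    mask (fun c => code (D r c - D s c)) 96 = 2 ^ 96 - 1 := by
  decide +kernel

theorem diff_inj (r s : Fin 9) (h : r ≠ s) :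
    Function.Injective fun c : Fin 96 => D r c - D s c := by
  intro x y hxy
  exact inj_of_mask _ (masks r s h) (congrArg code hxy)

noncomputable def e : Fin 96 ≃ G :=
  (Fintype.equivFinOfCardEq (by simp [G])).symm

noncomputable def L (k : Fin 8) (g c : Fin 96) : Fin 96 :=
  e.symm (e g + (D k.succ c - D (0 : Fin 9) c))

end MOLS96

open MOLS96 in
/-- There exist 8 mutually orthogonal Latin squares of order 96, i.e. N(96) ≥ 8. -/
theorem eight_MOLS_of_order_96 :
    ∃ L : Fin 8 → (Fin 96 → Fin 96 → Fin 96),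
      (∀ k, IsLatinSquare (L k)) ∧
      (∀ k k', k ≠ k' → IsOrthogonal (L k) (L k')) := by
  refine ⟨L, fun k => ⟨fun g => ?_, fun c => ?_⟩, fun k k' hk => ?_⟩
  · refine Finite.injective_iff_bijective.1 fun x y hxy => ?_
    exact diff_inj k.succ 0 (Fin.succ_ne_zero k) (add_left_cancel (e.symm.injective hxy))
  · refine Finite.injective_iff_bijective.1 fun x y hxy => ?_
    exact e.injective (add_right_cancel (e.symm.injective hxy))
  · rintro ⟨g, c⟩ ⟨g', c'⟩ h
    have h1 := e.symm.injective (congrArg Prod.fst h)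
    have h2 := e.symm.injective (congrArg Prod.snd h)
    dsimp only at h1 h2
    have hc : c = c' := by
      apply diff_inj k.succ k'.succ (fun h => hk (Fin.succ_injective _ h))
      have h3 := congrArg₂ (· - ·) h1 h2
      simpa using h3
    subst hc
    rw [e.injective (add_right_cancel h1)]
end

section
/- There exists a (35,6)-separable permutation code of length 35 and minimum distance 34; that is, there is a subset C of the symmetric group on Fin 35 of cardinality 6·35 = 210 which is the disjoint union of 6 sets L₁,…,L₆, each of cardinality 35, such that any two distinct permutations in the same L_i are at Hamming distance 35, and any two permutations in different blocks L_i, L_j are at Hamming distance 34. -/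
/-- Hamming distance between two permutations of `Fin n`:
the number of points where they differ. -/
def permHammingDist {n : ℕ} (σ τ : Equiv.Perm (Fin n)) : ℕ :=
  (Finset.univ.filter fun x => σ x ≠ τ x).card

/-- Six rows of a (35,7,1)-difference matrix over `ℤ/35` (the seventh row is zero). -/
def dmTable : List (List ℕ) :=
   [[0, 1, 2, 3, 4, 5, 6, 7, 8, 9, 10, 11, 12, 13, 14, 15, 16, 17, 18, 19, 20, 21, 22, 23, 24, 25, 26, 27, 28, 29, 30, 31, 32, 33, 34],
    [13, 11, 17, 20, 34, 29, 33, 16, 8, 12, 0, 27, 5, 24, 1, 9, 7, 14, 2, 26, 32, 25, 23, 21, 10, 31, 22, 6, 30, 28, 18, 4, 15, 3, 19],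
    [24, 1, 11, 17, 22, 15, 12, 19, 21, 29, 6, 18, 7, 5, 2, 8, 3, 32, 9, 0, 25, 20, 33, 26, 14, 23, 30, 28, 10, 13, 16, 4, 34, 27, 31],
    [5, 7, 10, 0, 20, 19, 34, 1, 32, 26, 33, 14, 22, 31, 12, 28, 11, 16, 18, 3, 27, 8, 23, 15, 9, 2, 30, 29, 4, 25, 21, 17, 6, 13, 24],
    [31, 34, 30, 19, 25, 14, 0, 33, 13, 9, 12, 22, 16, 27, 2, 5, 11, 23, 21, 20, 7, 6, 29, 1, 32, 24, 8, 4, 3, 18, 10, 28, 15, 17, 26],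
    [27, 13, 7, 26, 14, 2, 10, 16, 4, 28, 34, 22, 15, 0, 8, 33, 24, 32, 3, 17, 1, 11, 21, 5, 30, 25, 19, 29, 23, 20, 31, 9, 18, 12, 6]]

/-- Entry `x` of row `i` of the difference matrix. -/
def dmRow (i : Fin 6) (x : Fin 35) : Fin 35 :=
  Fin.ofNat 35 ((dmTable.getD i.val []).getD x.val 0)

theorem dmRow_inj : ∀ i x y, dmRow i x = dmRow i y → x = y := by
  decide +kernel

theorem dmRow_sub_inj : ∀ i j, i ≠ j → ∀ x y,
    dmRow i x - dmRow j x = dmRow i y - dmRow j y → x = y := by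
  decide +kernel

/-- Row `i` translated by `g`, as a permutation. -/
noncomputable def dmPerm (i : Fin 6) (g : Fin 35) : Equiv.Perm (Fin 35) :=
  Equiv.ofBijective (fun x => dmRow i x + g)
    (Finite.injective_iff_bijective.mp fun x y h => dmRow_inj i x y (add_right_cancel h))

theorem dmPerm_apply (i : Fin 6) (g x : Fin 35) : dmPerm i g x = dmRow i x + g := rfl

theorem dmPerm_inj (i : Fin 6) : Function.Injective (dmPerm i) := by
  intro g h e
  have := congrArg (fun s : Equiv.Perm (Fin 35) => s 0) e
  simp only [dmPerm_apply] at this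
  exact add_left_cancel this

theorem dmPerm_dist_same (i : Fin 6) (g h : Fin 35) (hne : g ≠ h) :
    permHammingDist (dmPerm i g) (dmPerm i h) = 35 := by
  unfold permHammingDist
  rw [Finset.filter_true_of_mem]
  · simp
  · intro x _ e
    exact hne (add_left_cancel (by simpa only [dmPerm_apply] using e))

theorem dmPerm_dist_ne (i j : Fin 6) (hij : i ≠ j) (g h : Fin 35) :
    permHammingDist (dmPerm i g) (dmPerm j h) = 34 := by
  have hb : Function.Bijective (fun x => dmRow i x - dmRow j x) :=
    Finite.injective_iff_bijective.mp fun x y e => dmRow_sub_inj i j hij x y e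
  obtain ⟨x₀, hx₀⟩ := hb.2 (h - g)
  have key : ∀ x, dmPerm i g x = dmPerm j h x ↔ x = x₀ := by
    intro x
    rw [dmPerm_apply, dmPerm_apply]
    constructor
    · intro e
      apply hb.1
      rw [hx₀]
      have := congrArg (fun z => z - g - dmRow j x) e
      simp only at this ⊢
      calc dmRow i x - dmRow j x = dmRow i x + g - g - dmRow j x := by abel
        _ = dmRow j x + h - g - dmRow j x := this
        _ = h - g := by abel
    · rintro rfl
      have := congrArg (fun z => z + dmRow j x + g) hx₀
      simp only at this
      calc dmRow i x + g = dmRow i x - dmRow j x + dmRow j x + g := by abel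
        _ = h - g + dmRow j x + g := this
        _ = dmRow j x + h := by abel
  unfold permHammingDist
  have : (Finset.univ.filter fun x => dmPerm i g x ≠ dmPerm j h x) = Finset.univ.erase x₀ := by
    ext x
    simp [key]
  rw [this, Finset.card_erase_of_mem (Finset.mem_univ _)]
  simp

/-- There exists a (35,6)-separable permutation code of length 35 and minimum
distance 34: a disjoint union of 6 blocks of 35 permutations each (so 210
codewords in total), with Hamming distance 35 between distinct permutations in
the same block and Hamming distance 34 between permutations in different blocks. -/
theorem separable_PA_35_6 :
    ∃ L : Fin 6 → Finset (Equiv.Perm (Fin 35)),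
      (∀ i, (L i).card = 35) ∧
      (∀ i j, i ≠ j → Disjoint (L i) (L j)) ∧
      (Finset.univ.biUnion L).card = 210 ∧
      (∀ i, ∀ σ ∈ L i, ∀ τ ∈ L i, σ ≠ τ → permHammingDist σ τ = 35) ∧
      (∀ i j, i ≠ j → ∀ σ ∈ L i, ∀ τ ∈ L j, permHammingDist σ τ = 34) := by
  classical
  have hcard : ∀ i, (Finset.univ.image (dmPerm i)).card = 35 := fun i => by
    rw [Finset.card_image_of_injective _ (dmPerm_inj i)]; simp
  have hdiff : ∀ i j, i ≠ j → ∀ σ ∈ Finset.univ.image (dmPerm i),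
      ∀ τ ∈ Finset.univ.image (dmPerm j), permHammingDist σ τ = 34 := by
    intro i j hij σ hσ τ hτ
    obtain ⟨g, -, rfl⟩ := Finset.mem_image.mp hσ
    obtain ⟨h, -, rfl⟩ := Finset.mem_image.mp hτ
    exact dmPerm_dist_ne i j hij g h
  have hdisj : ∀ i j, i ≠ j →
      Disjoint (Finset.univ.image (dmPerm i)) (Finset.univ.image (dmPerm j)) := by
    intro i j hij
    rw [Finset.disjoint_left]
    intro σ hi hj
    have := hdiff i j hij σ hi σ hj
    simp [permHammingDist] at this
  refine ⟨fun i => Finset.univ.image (dmPerm i), hcard, hdisj, ?_, ?_, hdiff⟩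
  · rw [Finset.card_biUnion fun i _ j _ hij => hdisj i j hij]
    simp [hcard]
  · intro i σ hσ τ hτ hne
    obtain ⟨g, -, rfl⟩ := Finset.mem_image.mp hσ
    obtain ⟨h, -, rfl⟩ := Finset.mem_image.mp hτ
    exact dmPerm_dist_same i g h fun e => hne (by rw [e])
end

section
/- There exists a (48,10)-separable permutation code of length 48 and minimum distance 47; that is, there is a subset C of the symmetric group on Fin 48 of cardinality 10·48 = 480 which is the disjoint union of 10 sets L₁,…,L₁₀, each of cardinality 48, such that any two distinct permutations in the same L_i are at Hamming distance 48, and any two permutations in different blocks L_i, L_j are at Hamming distance 47. -/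
namespace PA48

/-- The group of order 48 used in the construction. -/
abbrev G := ZMod 3 × ZMod 2 × ZMod 2 × ZMod 2 × ZMod 2

/-- Decoding of a number below 16 as an element of the elementary abelian part. -/
def lo (n : ℕ) : ZMod 2 × ZMod 2 × ZMod 2 × ZMod 2 :=
  ((n / 8 : ℕ), (n / 4 : ℕ), (n / 2 : ℕ), (n : ℕ))

/-- Decoding of a number below 48 as a group element. -/
def dec (n : ℕ) : G := ((n / 16 : ℕ), lo (n % 16))

/-- Group subtraction on codes. -/
def sub (a b : ℕ) : ℕ :=
  Nat.xor (a % 16) (b % 16) + 16 * ((a / 16 + 3 - b / 16) % 3)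

/-- Bitmask test for distinctness of the entries of a list. -/
def chk : List ℕ → ℕ → Bool
  | [], _ => true
  | a :: l, m => bif m.testBit a then false else chk l (m ||| 2 ^ a)

theorem chk_spec (l : List ℕ) : ∀ m, chk l m = true → l.Nodup ∧ ∀ a ∈ l, m.testBit a = false := by
  induction l with
  | nil => simp
  | cons a l ih =>
    intro m h
    rw [chk] at h
    cases hm : m.testBit a with
    | true => simp [hm] at h
    | false =>
      rw [hm, cond_false] at h
      obtain ⟨h1, h2⟩ := ih _ h
      simp only [Nat.testBit_or, Bool.or_eq_false_iff, Nat.testBit_two_pow] at h2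
      refine ⟨List.nodup_cons.2 ⟨fun ha => ?_, h1⟩, ?_⟩
      · simpa using (h2 a ha).2
      · intro b hb
        rcases List.mem_cons.1 hb with rfl | hb
        · exact hm
        · exact (h2 b hb).1

/-- The rows of the difference matrix. -/
def R : List (List ℕ) :=
   [[0, 1, 2, 3, 4, 5, 6, 7, 8, 9, 10, 11, 12, 13, 14, 15,
     16, 17, 18, 19, 20, 21, 22, 23, 24, 25, 26, 27, 28, 29, 30, 31,
     32, 33, 34, 35, 36, 37, 38, 39, 40, 41, 42, 43, 44, 45, 46, 47],
    [28, 12, 7, 38, 6, 39, 29, 13, 16, 0, 11, 42, 10, 43, 17, 1,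
     24, 34, 9, 33, 8, 32, 25, 35, 20, 46, 5, 45, 4, 44, 21, 47,
     36, 15, 31, 23, 30, 22, 37, 14, 40, 3, 19, 27, 18, 26, 41, 2],
    [9, 36, 15, 26, 4, 17, 2, 47, 10, 39, 12, 25, 7, 18, 1, 44,
     37, 6, 21, 40, 30, 35, 46, 13, 38, 5, 22, 43, 29, 32, 45, 14,
     31, 0, 42, 19, 33, 24, 20, 11, 28, 3, 41, 16, 34, 27, 23, 8],
    [32, 26, 14, 36, 1, 43, 47, 21, 37, 31, 11, 33, 4, 46, 42, 16,
     18, 22, 44, 15, 35, 0, 29, 25, 23, 19, 41, 10, 38, 5, 24, 28,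
     27, 9, 34, 7, 45, 8, 20, 6, 30, 12, 39, 2, 40, 13, 17, 3],
    [19, 25, 7, 47, 4, 44, 16, 26, 17, 27, 5, 45, 6, 46, 18, 24,
     43, 10, 13, 23, 14, 20, 40, 9, 41, 8, 15, 21, 12, 22, 42, 11,
     29, 35, 2, 37, 1, 38, 30, 32, 31, 33, 0, 39, 3, 36, 28, 34],
    [23, 46, 0, 34, 5, 39, 18, 43, 29, 36, 10, 40, 15, 45, 24, 33,
     9, 44, 21, 25, 16, 28, 12, 41, 3, 38, 31, 19, 26, 22, 6, 35,
     1, 20, 47, 8, 42, 13, 4, 17, 11, 30, 37, 2, 32, 7, 14, 27],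
    [27, 38, 6, 12, 15, 5, 18, 47, 22, 43, 11, 1, 2, 8, 31, 34,
     45, 29, 40, 0, 33, 9, 36, 20, 32, 16, 37, 13, 44, 4, 41, 25,
     3, 35, 19, 28, 26, 21, 10, 42, 14, 46, 30, 17, 23, 24, 7, 39],
    [37, 32, 8, 19, 6, 29, 43, 46, 44, 41, 1, 26, 15, 20, 34, 39,
     31, 25, 13, 45, 3, 35, 17, 23, 22, 16, 4, 36, 10, 42, 24, 30,
     11, 27, 7, 47, 9, 33, 5, 21, 2, 18, 14, 38, 0, 40, 12, 28],
    [41, 28, 0, 24, 12, 20, 37, 16, 46, 27, 7, 31, 11, 19, 34, 23,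
     2, 36, 22, 13, 26, 1, 14, 40, 5, 35, 17, 10, 29, 6, 9, 47,
     32, 45, 4, 25, 8, 21, 44, 33, 39, 42, 3, 30, 15, 18, 43, 38],
    [33, 5, 3, 18, 9, 24, 43, 15, 46, 10, 12, 29, 6, 23, 36, 0,
     39, 1, 42, 20, 32, 30, 45, 11, 40, 14, 37, 27, 47, 17, 34, 4,
     41, 21, 28, 13, 22, 7, 35, 31, 38, 26, 19, 2, 25, 8, 44, 16]]

def row (i : Fin 10) : List ℕ := R.getD i []

theorem row_len : ∀ i, (row i).length = 48 := by decide +kernel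
theorem row_lt : ∀ i, ∀ a ∈ row i, a < 48 := by decide +kernel
theorem row_chk : ∀ i, chk (row i) 0 = true := by decide +kernel
theorem row_nodup (i) : (row i).Nodup := (chk_spec _ _ (row_chk i)).1
theorem diff_chk : ∀ i j, i ≠ j → chk (List.zipWith sub (row i) (row j)) 0 = true := by
  decide +kernel
theorem diff_nodup (i j) (h : i ≠ j) : (List.zipWith sub (row i) (row j)).Nodup :=
  (chk_spec _ _ (diff_chk i j h)).1

theorem lo_inj : ∀ a : Fin 16, ∀ b : Fin 16, lo a = lo b → a = b := by decide +kernel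
theorem hi_inj : ∀ a : Fin 3, ∀ b : Fin 3, ((a.1 : ℕ) : ZMod 3) = (b.1 : ℕ) → a = b := by
  decide +kernel
theorem lo_sub : ∀ a : Fin 16, ∀ b : Fin 16, lo a - lo b = lo (Nat.xor a b) := by
  decide +kernel
theorem hi_sub : ∀ a : Fin 3, ∀ b : Fin 3,
    ((a.1 : ℕ) : ZMod 3) - (b.1 : ℕ) = ((a.1 + 3 - b.1) % 3 : ℕ) := by
  decide +kernel

theorem xor_lt (a b : ℕ) : Nat.xor (a % 16) (b % 16) < 16 :=
  Nat.xor_lt_two_pow (n := 4) (Nat.mod_lt _ (by norm_num)) (Nat.mod_lt _ (by norm_num))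

theorem dec_inj (a b : Fin 48) (h : dec a = dec b) : a = b := by
  have h1 := hi_inj ⟨a / 16, by omega⟩ ⟨b / 16, by omega⟩ (congrArg Prod.fst h)
  have h2 := lo_inj ⟨a % 16, by omega⟩ ⟨b % 16, by omega⟩ (congrArg Prod.snd h)
  simp only [Fin.mk.injEq] at h1 h2
  omega

theorem sub_lt (a b : Fin 48) : sub a b < 48 := by
  have := xor_lt a b
  unfold sub
  omega

theorem dec_sub (a b : Fin 48) : dec a - dec b = dec (sub a b) := by
  have h0 := xor_lt a b
  have h1 := hi_sub ⟨a / 16, by omega⟩ ⟨b / 16, by omega⟩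
  have h2 := lo_sub ⟨a % 16, by omega⟩ ⟨b % 16, by omega⟩
  have e1 : sub a b / 16 = (a.1 / 16 + 3 - b / 16) % 3 := by unfold sub; omega
  have e2 : sub a b % 16 = Nat.xor (a.1 % 16) (b % 16) := by unfold sub; omega
  apply Prod.ext
  · change ((a.1 / 16 : ℕ) : ZMod 3) - ((b.1 / 16 : ℕ) : ZMod 3) = ((sub a b / 16 : ℕ) : ZMod 3)
    rw [e1]
    exact h1
  · change lo (a.1 % 16) - lo (b.1 % 16) = lo (sub a b % 16)
    rw [e2]
    exact h2

def pn (i : Fin 10) (x : Fin 48) : ℕ := (row i)[x.1]'(by rw [row_len]; exact x.2)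

theorem pn_lt (i x) : pn i x < 48 := row_lt i _ (List.getElem_mem _)

def p (i : Fin 10) (x : Fin 48) : G := dec (pn i x)

theorem dec_inj' {a b : ℕ} (ha : a < 48) (hb : b < 48) (h : dec a = dec b) : a = b := by
  have := dec_inj ⟨a, ha⟩ ⟨b, hb⟩ h
  simpa using this

theorem p_inj (i) : Function.Injective (p i) := by
  intro x y h
  have h1 := dec_inj' (pn_lt i x) (pn_lt i y) h
  exact Fin.ext ((row_nodup i).getElem_inj_iff.1 h1)

theorem p_sub_inj (i j) (hij : i ≠ j) : Function.Injective fun x => p i x - p j x := by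
  intro x y h
  have key : ∀ z, p i z - p j z = dec (sub (pn i z) (pn j z)) := fun z =>
    dec_sub ⟨_, pn_lt i z⟩ ⟨_, pn_lt j z⟩
  have hl : ∀ z, sub (pn i z) (pn j z) < 48 := fun z =>
    sub_lt ⟨_, pn_lt i z⟩ ⟨_, pn_lt j z⟩
  simp only [key] at h
  have h1 := dec_inj' (hl x) (hl y) h
  have hlen : (List.zipWith sub (row i) (row j)).length = 48 := by
    simp [row_len]
  have h2 : (List.zipWith sub (row i) (row j))[x.1]'(by rw [hlen]; exact x.2) =
      (List.zipWith sub (row i) (row j))[y.1]'(by rw [hlen]; exact y.2) := by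
    simpa [pn] using h1
  exact Fin.ext ((diff_nodup i j hij).getElem_inj_iff.1 h2)

theorem card_G : Fintype.card G = 48 := by simp [G, ZMod.card]

theorem bij {f : Fin 48 → G} (hf : Function.Injective f) : Function.Bijective f :=
  (Fintype.bijective_iff_injective_and_card f).2 ⟨hf, by rw [card_G, Fintype.card_fin]⟩

noncomputable def pe (i : Fin 10) : Fin 48 ≃ G := Equiv.ofBijective (p i) (bij (p_inj i))

/-- The permutation attached to a row and a group element. -/
noncomputable def s (i : Fin 10) (g : G) : Equiv.Perm (Fin 48) :=
  ((pe i).trans (Equiv.addRight g)).trans (pe 0).symm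

theorem s_eq_iff (i j g h x) : s i g x = s j h x ↔ p i x + g = p j x + h := by
  simp [s, pe]

theorem dist_same (i g h) (hgh : g ≠ h) : permHammingDist (s i g) (s i h) = 48 := by
  unfold permHammingDist
  rw [Finset.filter_true_of_mem]
  · simp
  · intro x _
    rw [Ne, s_eq_iff]
    simpa using hgh

theorem dist_diff (i j) (hij : i ≠ j) (g h) : permHammingDist (s i g) (s j h) = 47 := by
  unfold permHammingDist
  obtain ⟨x0, hx0⟩ := (bij (p_sub_inj i j hij)).2 (h - g)
  have : (Finset.univ.filter fun x => s i g x ≠ s j h x) = Finset.univ.erase x0 := by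
    ext x
    simp only [Finset.mem_filter, Finset.mem_univ, true_and, Finset.mem_erase, and_true]
    rw [Ne, s_eq_iff, not_iff_not]
    constructor
    · intro hx
      apply p_sub_inj i j hij
      simp only at hx0 ⊢
      rw [hx0, sub_eq_sub_iff_add_eq_add, hx, add_comm]
    · rintro rfl
      simp only at hx0
      rw [sub_eq_sub_iff_add_eq_add] at hx0
      rw [hx0, add_comm]
  rw [this, Finset.card_erase_of_mem (Finset.mem_univ _)]
  simp

theorem dist_self (σ : Equiv.Perm (Fin 48)) : permHammingDist σ σ = 0 := by
  simp [permHammingDist]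

theorem s_inj (i) : Function.Injective (s i) := by
  intro g h e
  by_contra hgh
  have := dist_same i g h hgh
  rw [e, dist_self] at this
  omega

theorem main : ∃ L : Fin 10 → Finset (Equiv.Perm (Fin 48)),
    (∀ i, (L i).card = 48) ∧
    (∀ i j, i ≠ j → Disjoint (L i) (L j)) ∧
    (Finset.univ.biUnion L).card = 480 ∧
    (∀ i, ∀ σ ∈ L i, ∀ τ ∈ L i, σ ≠ τ → permHammingDist σ τ = 48) ∧
    (∀ i j, i ≠ j → ∀ σ ∈ L i, ∀ τ ∈ L j, permHammingDist σ τ = 47) := by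
  have hc : ∀ i, (Finset.univ.image (s i)).card = 48 := by
    intro i
    rw [Finset.card_image_of_injective _ (s_inj i), Finset.card_univ, card_G]
  have hd : ∀ i j, i ≠ j → ∀ σ ∈ Finset.univ.image (s i), ∀ τ ∈ Finset.univ.image (s j),
      permHammingDist σ τ = 47 := by
    intro i j hij σ hσ τ hτ
    obtain ⟨g, _, rfl⟩ := Finset.mem_image.1 hσ
    obtain ⟨h, _, rfl⟩ := Finset.mem_image.1 hτ
    exact dist_diff i j hij g h
  have hdis : ∀ i j, i ≠ j → Disjoint (Finset.univ.image (s i)) (Finset.univ.image (s j)) := by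
    intro i j hij
    rw [Finset.disjoint_left]
    intro σ h1 h2
    have := hd i j hij σ h1 σ h2
    rw [dist_self] at this
    omega
  refine ⟨fun i => Finset.univ.image (s i), hc, hdis, ?_, ?_, hd⟩
  · rw [Finset.card_biUnion (fun i _ j _ hij => hdis i j hij)]
    simp [hc]
  · intro i σ hσ τ hτ hne
    obtain ⟨g, _, rfl⟩ := Finset.mem_image.1 hσ
    obtain ⟨h, _, rfl⟩ := Finset.mem_image.1 hτ
    exact dist_same i g h (fun e => hne (by rw [e]))

end PA48

/-- There exists a (48,10)-separable permutation code of length 48 and minimum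
distance 47: a disjoint union of 10 blocks of 48 permutations each (so 480
codewords in total), with Hamming distance 48 between distinct permutations in
the same block and Hamming distance 47 between permutations in different blocks. -/
theorem separable_PA_48_10 :
    ∃ L : Fin 10 → Finset (Equiv.Perm (Fin 48)),
      (∀ i, (L i).card = 48) ∧
      (∀ i j, i ≠ j → Disjoint (L i) (L j)) ∧
      (Finset.univ.biUnion L).card = 480 ∧
      (∀ i, ∀ σ ∈ L i, ∀ τ ∈ L i, σ ≠ τ → permHammingDist σ τ = 48) ∧
      (∀ i j, i ≠ j → ∀ σ ∈ L i, ∀ τ ∈ L j, permHammingDist σ τ = 47) := by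
  exact PA48.main
end

section
/- There exists a (96,8)-separable permutation code of length 96 and minimum distance 95; that is, there is a subset C of the symmetric group on Fin 96 of cardinality 8·96 = 768 which is the disjoint union of 8 sets L₁,…,L₈, each of cardinality 96, such that any two distinct permutations in the same L_i are at Hamming distance 96, and any two permutations in different blocks L_i, L_j are at Hamming distance 95. -/
/-- The abelian group `Z_3 × Z_2^5` of order 96. -/
abbrev GG : Type := Fin 3 × Fin 2 × Fin 2 × Fin 2 × Fin 2 × Fin 2

/-- Decoding of numbers below 96 as group elements. -/
def decG (n : ℕ) : GG :=
  (Fin.ofNat 3 (n / 32), Fin.ofNat 2 n, Fin.ofNat 2 (n / 2), Fin.ofNat 2 (n / 4),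
    Fin.ofNat 2 (n / 8), Fin.ofNat 2 (n / 16))

/-- Encoding of group elements as numbers below 96. -/
def encG (g : GG) : ℕ :=
  32 * g.1.val + g.2.1.val + 2 * g.2.2.1.val + 4 * g.2.2.2.1.val + 8 * g.2.2.2.2.1.val
    + 16 * g.2.2.2.2.2.val

/-- Eight rows of a `(96, 9; 1)` difference matrix over `GG` (the ninth row is zero). -/
def rowsTable : List (List ℕ) :=
  [[24, 10, 27, 9, 22, 4, 21, 7, 55, 37, 52, 38, 57, 43, 58, 40, 73, 91, 74, 88, 71, 85, 68, 86,
     61, 47, 62, 44, 51, 33, 48, 34, 3, 17, 0, 18, 13, 31, 14, 28, 60, 46, 63, 45, 50, 32, 49, 35,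
     89, 75, 90, 72, 87, 69, 84, 70, 19, 1, 16, 2, 29, 15, 30, 12, 54, 36, 53, 39, 56, 42, 59, 41,
     82, 64, 81, 67, 92, 78, 95, 77, 8, 26, 11, 25, 6, 20, 5, 23, 66, 80, 65, 83, 76, 94, 79, 93],
   [1, 18, 16, 3, 8, 27, 25, 10, 84, 71, 69, 86, 93, 78, 76, 95, 56, 43, 41, 58, 49, 34, 32, 51,
     17, 2, 0, 19, 24, 11, 9, 26, 61, 46, 44, 63, 52, 39, 37, 54, 82, 65, 67, 80, 91, 72, 74, 89,
     66, 81, 83, 64, 75, 88, 90, 73, 7, 20, 22, 5, 14, 29, 31, 12, 23, 4, 6, 21, 30, 13, 15, 28,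
     68, 87, 85, 70, 77, 94, 92, 79, 59, 40, 42, 57, 50, 33, 35, 48, 62, 45, 47, 60, 55, 36, 38, 53],
   [27, 2, 23, 14, 16, 9, 28, 5, 85, 76, 89, 64, 94, 71, 82, 75, 30, 7, 18, 11, 21, 12, 25, 0,
     55, 46, 59, 34, 60, 37, 48, 41, 74, 83, 70, 95, 65, 88, 77, 84, 29, 4, 17, 8, 22, 15, 26, 3,
     72, 81, 68, 93, 67, 90, 79, 86, 44, 53, 32, 57, 39, 62, 43, 50, 92, 69, 80, 73, 87, 78, 91, 66,
     36, 61, 40, 49, 47, 54, 35, 58, 20, 13, 24, 1, 31, 6, 19, 10, 56, 33, 52, 45, 51, 42, 63, 38],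
   [2, 20, 27, 13, 1, 23, 24, 14, 11, 29, 18, 4, 8, 30, 17, 7, 45, 59, 52, 34, 46, 56, 55, 33,
     69, 83, 92, 74, 70, 80, 95, 73, 15, 25, 22, 0, 12, 26, 21, 3, 75, 93, 82, 68, 72, 94, 81, 71,
     77, 91, 84, 66, 78, 88, 87, 65, 37, 51, 60, 42, 38, 48, 63, 41, 57, 47, 32, 54, 58, 44, 35, 53,
     43, 61, 50, 36, 40, 62, 49, 39, 64, 86, 89, 79, 67, 85, 90, 76, 31, 9, 6, 16, 28, 10, 5, 19],
   [21, 25, 19, 31, 26, 22, 28, 16, 34, 46, 36, 40, 45, 33, 43, 39, 3, 15, 5, 9, 12, 0, 10, 6,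
     29, 17, 27, 23, 18, 30, 20, 24, 69, 73, 67, 79, 74, 70, 76, 64, 90, 86, 92, 80, 85, 89, 83, 95,
     7, 11, 1, 13, 8, 4, 14, 2, 94, 82, 88, 84, 81, 93, 87, 91, 51, 63, 53, 57, 60, 48, 58, 54,
     56, 52, 62, 50, 55, 59, 49, 61, 37, 41, 35, 47, 42, 38, 44, 32, 65, 77, 71, 75, 78, 66, 72, 68],
   [20, 28, 16, 24, 12, 4, 8, 0, 34, 42, 38, 46, 58, 50, 62, 54, 76, 68, 72, 64, 84, 92, 80, 88,
     95, 87, 91, 83, 71, 79, 67, 75, 74, 66, 78, 70, 82, 90, 86, 94, 13, 5, 9, 1, 21, 29, 17, 25,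
     32, 40, 36, 44, 56, 48, 60, 52, 59, 51, 63, 55, 35, 43, 39, 47, 27, 19, 31, 23, 3, 11, 7, 15,
     69, 77, 65, 73, 93, 85, 89, 81, 41, 33, 45, 37, 49, 57, 53, 61, 14, 6, 10, 2, 22, 30, 18, 26],
   [27, 1, 28, 6, 9, 19, 14, 20, 16, 10, 23, 13, 2, 24, 5, 31, 84, 78, 83, 73, 70, 92, 65, 91,
     51, 41, 52, 46, 33, 59, 38, 60, 3, 25, 4, 30, 17, 11, 22, 12, 88, 66, 95, 69, 74, 80, 77, 87,
     36, 62, 35, 57, 54, 44, 49, 43, 85, 79, 82, 72, 71, 93, 64, 90, 89, 67, 94, 68, 75, 81, 76, 86,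
     7, 29, 0, 26, 21, 15, 18, 8, 34, 56, 37, 63, 48, 42, 55, 45, 58, 32, 61, 39, 40, 50, 47, 53],
   [8, 19, 29, 6, 21, 14, 0, 27, 72, 83, 93, 70, 85, 78, 64, 91, 51, 40, 38, 61, 46, 53, 59, 32,
     94, 69, 75, 80, 67, 88, 86, 77, 43, 48, 62, 37, 54, 45, 35, 56, 4, 31, 17, 10, 25, 2, 12, 23,
     39, 60, 50, 41, 58, 33, 47, 52, 79, 84, 90, 65, 82, 73, 71, 92, 55, 44, 34, 57, 42, 49, 63, 36,
     3, 24, 22, 13, 30, 5, 11, 16, 1, 26, 20, 15, 28, 7, 9, 18, 95, 68, 74, 81, 66, 89, 87, 76]]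

/-- The rows as maps into the group. -/
def phi (i : ℕ) (x : ℕ) : GG := decG ((rowsTable.getD i []).getD x 0)

/-- Bit mask of the set of values `f 0, …, f (n-1)`. -/
def maskOf (f : ℕ → ℕ) : ℕ → ℕ
  | 0 => 0
  | n + 1 => maskOf f n ||| 1 <<< f n

theorem testBit_maskOf (f : ℕ → ℕ) (n v : ℕ) (h : (maskOf f n).testBit v = true) :
    ∃ x, x < n ∧ f x = v := by
  induction n with
  | zero => simp [maskOf] at h
  | succ n ih =>
    rw [maskOf, Nat.testBit_or, Bool.or_eq_true] at h
    rcases h with h | h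
    · obtain ⟨x, hx, hv⟩ := ih h
      exact ⟨x, by omega, hv⟩
    · refine ⟨n, by omega, ?_⟩
      rw [Nat.one_shiftLeft, Nat.testBit_two_pow] at h
      simpa using h

theorem encG_lt (g : GG) : encG g < 96 := by
  unfold encG
  omega

theorem decG_encG : ∀ g : GG, decG (encG g) = g := by decide +kernel

theorem card_GG : Fintype.card GG = 96 := by simp [GG]

theorem bij_of_mask (f : ℕ → GG) (h : maskOf (fun x => encG (f x)) 96 = 2 ^ 96 - 1) :
    Function.Bijective (fun x : Fin 96 => f x) := by
  rw [Fintype.bijective_iff_surjective_and_card]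
  refine ⟨fun g => ?_, by rw [card_GG, Fintype.card_fin]⟩
  obtain ⟨x, hx, hv⟩ := testBit_maskOf (fun x => encG (f x)) 96 (encG g) (by
    rw [h, Nat.testBit_two_pow_sub_one]
    simpa using encG_lt g)
  refine ⟨⟨x, hx⟩, ?_⟩
  have := congrArg decG hv
  simpa [decG_encG] using this

theorem mask_row : ∀ i < 8, maskOf (fun x => encG (phi i x)) 96 = 2 ^ 96 - 1 := by
  decide +kernel

theorem mask_diff : ∀ i < 8, ∀ j < 8, i ≠ j →
    maskOf (fun x => encG (phi i x - phi j x)) 96 = 2 ^ 96 - 1 := by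
  decide +kernel

theorem bij_row (i : Fin 8) : Function.Bijective (fun x : Fin 96 => phi i x) :=
  bij_of_mask _ (mask_row i i.2)

theorem bij_diff (i j : Fin 8) (h : i ≠ j) :
    Function.Bijective (fun x : Fin 96 => phi i x - phi j x) :=
  bij_of_mask (fun x => phi i x - phi j x)
    (mask_diff i i.2 j j.2 (fun e => h (Fin.ext e)))

/-- An arbitrary identification of the group with the set of points. -/
noncomputable def eG : GG ≃ Fin 96 := Fintype.equivFinOfCardEq card_GG

/-- The codewords. -/
noncomputable def word (i : Fin 8) (g : GG) : Equiv.Perm (Fin 96) :=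
  ((Equiv.ofBijective _ (bij_row i)).trans (Equiv.addRight g)).trans eG

theorem word_apply (i : Fin 8) (g : GG) (x : Fin 96) : word i g x = eG (phi i x + g) := rfl

theorem dist_same (i : Fin 8) (g h : GG) (hne : g ≠ h) :
    permHammingDist (word i g) (word i h) = 96 := by
  unfold permHammingDist
  rw [Finset.filter_true_of_mem]
  · simp
  · intro x _
    simpa [word_apply] using hne

theorem dist_diff (i j : Fin 8) (hij : i ≠ j) (g h : GG) :
    permHammingDist (word i g) (word j h) = 95 := by
  obtain ⟨x, hx, hu⟩ := (bij_diff i j hij).existsUnique (h - g)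
  have key : (Finset.univ.filter fun y => word i g y ≠ word j h y) = Finset.univ.erase x := by
    ext y
    simp only [Finset.mem_filter, Finset.mem_univ, true_and, Finset.mem_erase, and_true,
      word_apply, ne_eq, EmbeddingLike.apply_eq_iff_eq]
    rw [not_iff_not]
    constructor
    · intro e
      apply hu
      show phi i y - phi j y = h - g
      rw [sub_eq_sub_iff_add_eq_add, e, add_comm]
    · rintro rfl
      have hx' : phi i y - phi j y = h - g := hx
      rw [sub_eq_sub_iff_add_eq_add] at hx'
      rw [hx', add_comm]
  unfold permHammingDist
  rw [key, Finset.card_erase_of_mem (Finset.mem_univ x)]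
  simp

theorem word_injective (i : Fin 8) : Function.Injective (word i) := by
  intro g h e
  have := congrArg (fun s : Equiv.Perm (Fin 96) => s 0) e
  simpa [word_apply] using this



/-- There exists a (96,8)-separable permutation code of length 96 and minimum
distance 95: a disjoint union of 8 blocks of 96 permutations each (so 768
codewords in total), with Hamming distance 96 between distinct permutations in
the same block and Hamming distance 95 between permutations in different blocks. -/
theorem separable_PA_96_8 :
    ∃ L : Fin 8 → Finset (Equiv.Perm (Fin 96)),
      (∀ i, (L i).card = 96) ∧
      (∀ i j, i ≠ j → Disjoint (L i) (L j)) ∧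
      (Finset.univ.biUnion L).card = 768 ∧
      (∀ i, ∀ σ ∈ L i, ∀ τ ∈ L i, σ ≠ τ → permHammingDist σ τ = 96) ∧
      (∀ i j, i ≠ j → ∀ σ ∈ L i, ∀ τ ∈ L j, permHammingDist σ τ = 95) := by
  classical
  have hcard : ∀ i, ((Finset.univ : Finset GG).image (word i)).card = 96 := by
    intro i
    rw [Finset.card_image_of_injective _ (word_injective i), Finset.card_univ, card_GG]
  have hdisj : ∀ i j, i ≠ j → Disjoint ((Finset.univ : Finset GG).image (word i))
      ((Finset.univ : Finset GG).image (word j)) := by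
    intro i j hij
    rw [Finset.disjoint_left]
    intro s hs ht
    simp only [Finset.mem_image, Finset.mem_univ, true_and] at hs ht
    obtain ⟨g, rfl⟩ := hs
    obtain ⟨h, e⟩ := ht
    have := dist_diff i j hij g h
    rw [e] at this
    simp [permHammingDist] at this
  refine ⟨fun i => Finset.univ.image (word i), hcard, hdisj, ?_, ?_, ?_⟩
  · rw [Finset.card_biUnion (fun i _ j _ hij => hdisj i j hij)]
    simp [hcard]
  · intro i s hs t ht hne
    simp only [Finset.mem_image, Finset.mem_univ, true_and] at hs ht
    obtain ⟨g, rfl⟩ := hs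
    obtain ⟨h, rfl⟩ := ht
    exact dist_same i g h (fun e => hne (by rw [e]))
  · intro i j hij s hs t ht
    simp only [Finset.mem_image, Finset.mem_univ, true_and] at hs ht
    obtain ⟨g, rfl⟩ := hs
    obtain ⟨h, rfl⟩ := ht
    exact dist_diff i j hij g h
end

section
/- There exists a permutation code C of length 20 and minimum distance 19 of cardinality 96 inside the symmetric group on Fin 20 which is the disjoint union of two sets C₁ and C₂ such that: C₁ has cardinality 80 and is a (20,4)-separable (20,19)-PA (a disjoint union of 4 blocks of 20 permutations each, with within-block pairwise Hamming distance 20 and cross-block Hamming distance 19); C₂ has cardinality 16 and any two distinct permutations in C₂ are at Hamming distance 20; and any two distinct permutations of C are at Hamming distance at least 19. -/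
/-- The 96 codewords; the word `w` encodes `x ↦ w / 20 ^ x % 20`.  Indices `20 b, …, 20 b + 19`
(`b < 4`) are the four blocks, indices `80, …, 95` are the second part. -/
def paTab : List ℕ := [
  28851525551468451359979282,
  58261061746021085801352075,
  15930232739957614970409939,
  9550708619709638352327106,
  91671854502762771619510543,
  99419096295154999641049144,
  80250136779588205345951217,
  37654246646343845869592773,
  24600521211590288005623880,
  78098615907403099034204036,
  4016503132475677263137387,
  85848285686165603896514170,
  43386711542950376873651834,
  34392284679667276417165001,
  64215703381813132916268448,
  71831888696104893704291049,
  52793657118586086642789312,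
  12812653426199071806354678,
  52056656808592406740861985,
  102933655527445473738966131,
  46720502755675912130034302,
  99691721862067901553654473,
  7055442209581290023657891,
  41770098011148899423684248,
  80703279169948127059453399,
  87141193601965031064760445,
  70621518645706280252177330,
  28520425197671743987715037,
  51636015438107284297669164,
  93210067158664624942351601,
  19257485919628673426872207,
  74719057461225527458412578,
  31890154192631408118819996,
  14176337672253661326926343,
  53115744712145765124295294,
  62168545544157549769522540,
  95456229809659054315419235,
  926648476829625252553132,
  24048481021162509594431069,
  65747051139769130877589706,
  48657137909292836723386710,
  34877773899792633434302622,
  73863261352389399659020860,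
  14777410531508205718185629,
  91351405698834086888640919,
  28241402337211598768449571,
  44744903744311874329159843,
  61556325294307145488125298,
  56993787994887128719472381,
  96818679254312585006414057,
  21200675449437598628224615,
  10036197022790271499060727,
  101319396132342160954182965,
  39612433810563431621427724,
  63764198959836204985482814,
  784939877356117473211476,
  19903326867304648392397948,
  89012460074265026752887393,
  81828811273942354014714286,
  69231472515314690943252152,
  41286501960551978901030322,
  95931884627160436942374872,
  35409091899970877452465865,
  84485984108038887974245738,
  17517034285396532013043195,
  30119694518986842327735501,
  57344873325601065527678449,
  103840188851145049474537308,
  90028624037915800428514596,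
  23512298418916739488058359,
  13692740804407473605788227,
  68344333824270331037532977,
  7946075842066359387627960,
  59513335269948526709487633,
  42351729843589306749881090,
  5147374182037217030893406,
  82186138906710959590836544,
  76377500473342930769699203,
  65062528801873426363752491,
  48478066018069258224816254,
  65938846253038732054561662,
  93532934269880837319403767,
  28683338068397512702980614,
  1089250051550017967822719,
  88079649237733024601928083,
  60485561220885529866770188,
  43860267995182455845759556,
  16266179978340350580917451,
  5297350694580519340454398,
  32891438711428014075612293,
  56277460577857723229296404,
  83871548594699828494138509,
  104567135734072022160664820,
  76973047717224527425506925,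
  49378925207764316899191135,
  21784837190922211634349030]

def paVal (w x : ℕ) : ℕ := w / 20 ^ x % 20

def paDiff (w v : ℕ) : ℕ → ℕ
  | 0 => 0
  | n + 1 => paDiff w v n + (if paVal w n = paVal v n then 0 else 1)

def paCode (i : ℕ) : ℕ := paTab.getD i 0

theorem paDiff_eq (w v n : ℕ) :
    paDiff w v n = ∑ x ∈ Finset.range n, (if paVal w x = paVal v x then 0 else 1) := by
  induction n with
  | zero => rfl
  | succ n ih => rw [Finset.sum_range_succ, ← ih]; rfl

theorem paInj_chk : ∀ i < 96, ∀ x < 20, ∀ y < 20,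
    paVal (paCode i) x = paVal (paCode i) y → x = y := by
  decide +kernel

theorem paBlock_chk : ∀ i < 80, ∀ j < 80, i ≠ j →
    paDiff (paCode i) (paCode j) 20 = if i / 20 = j / 20 then 20 else 19 := by
  decide +kernel

theorem paTail_chk : ∀ i < 96, ∀ j < 96, 80 ≤ i → 80 ≤ j → i ≠ j →
    paDiff (paCode i) (paCode j) 20 = 20 := by
  decide +kernel

theorem paAll_chk : ∀ i < 96, ∀ j < 96, i ≠ j → 19 ≤ paDiff (paCode i) (paCode j) 20 := by
  decide +kernel

noncomputable def paPerm (i : Fin 96) : Equiv.Perm (Fin 20) :=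
  Equiv.ofBijective (fun x => ⟨paVal (paCode i) x, Nat.mod_lt _ (by norm_num)⟩)
    (Finite.injective_iff_bijective.mp (fun x y h => Fin.ext
      (paInj_chk i i.2 x x.2 y y.2 (congrArg Fin.val h))))

theorem paPerm_dist (i j : Fin 96) :
    permHammingDist (paPerm i) (paPerm j) = paDiff (paCode i) (paCode j) 20 := by
  rw [paDiff_eq, permHammingDist, Finset.card_filter,
    ← Fin.sum_univ_eq_sum_range (fun x => if paVal (paCode i) x = paVal (paCode j) x then 0 else 1)]
  refine Finset.sum_congr rfl fun x _ => ?_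
  have h : paPerm i x = paPerm j x ↔ paVal (paCode i) x = paVal (paCode j) x := by
    simp [paPerm, Fin.ext_iff]
  by_cases hh : paVal (paCode i) x = paVal (paCode j) x
  · rw [if_neg (not_not.mpr (h.mpr hh)), if_pos hh]
  · rw [if_pos (fun e => hh (h.mp e)), if_neg hh]

theorem paDist_self (σ : Equiv.Perm (Fin 20)) : permHammingDist σ σ = 0 := by
  simp [permHammingDist]

theorem paPerm_inj : Function.Injective paPerm := by
  intro i j h
  by_contra hne
  have h1 := paAll_chk i i.2 j j.2 (fun e => hne (Fin.ext e))
  rw [← paPerm_dist, h, paDist_self] at h1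
  omega

def paIdx (b : Fin 4) : Finset (Fin 96) := Finset.univ.filter fun i => i.val / 20 = b.val

def paTail : Finset (Fin 96) := Finset.univ.filter fun i => 80 ≤ i.val

theorem paIdx_card : ∀ b, (paIdx b).card = 20 := by decide +kernel

theorem paIdx_card_union : (Finset.univ.biUnion paIdx).card = 80 := by decide +kernel

theorem paTail_card : paTail.card = 16 := by decide +kernel

theorem extendable_PA_20 :
    ∃ (C₁ C₂ : Finset (Equiv.Perm (Fin 20))) (L : Fin 4 → Finset (Equiv.Perm (Fin 20))),
      Disjoint C₁ C₂ ∧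
      (C₁ ∪ C₂).card = 96 ∧
      C₁.card = 80 ∧
      C₂.card = 16 ∧
      C₁ = Finset.univ.biUnion L ∧
      (∀ i, (L i).card = 20) ∧
      (∀ i j, i ≠ j → Disjoint (L i) (L j)) ∧
      (∀ i, ∀ σ ∈ L i, ∀ τ ∈ L i, σ ≠ τ → permHammingDist σ τ = 20) ∧
      (∀ i j, i ≠ j → ∀ σ ∈ L i, ∀ τ ∈ L j, permHammingDist σ τ = 19) ∧
      (∀ σ ∈ C₂, ∀ τ ∈ C₂, σ ≠ τ → permHammingDist σ τ = 20) ∧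
      (∀ σ ∈ C₁ ∪ C₂, ∀ τ ∈ C₁ ∪ C₂, σ ≠ τ → 19 ≤ permHammingDist σ τ) := by
  classical
  have hdis : Disjoint (Finset.univ.biUnion paIdx) paTail := by
    rw [Finset.disjoint_left]
    intro i hi hj
    simp only [Finset.mem_biUnion, paIdx, paTail, Finset.mem_filter, Finset.mem_univ,
      true_and] at hi hj
    obtain ⟨b, hb⟩ := hi
    have := b.2
    omega
  have hD : Disjoint ((Finset.univ.biUnion paIdx).image paPerm) (paTail.image paPerm) :=
    (Finset.disjoint_image paPerm_inj).mpr hdis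
  have h1 : ((Finset.univ.biUnion paIdx).image paPerm).card = 80 := by
    rw [Finset.card_image_of_injective _ paPerm_inj, paIdx_card_union]
  have h2 : (paTail.image paPerm).card = 16 := by
    rw [Finset.card_image_of_injective _ paPerm_inj, paTail_card]
  refine ⟨(Finset.univ.biUnion paIdx).image paPerm, paTail.image paPerm,
    fun b => (paIdx b).image paPerm, hD, ?_, h1, h2, ?_, ?_, ?_, ?_, ?_, ?_, ?_⟩
  · rw [Finset.card_union_of_disjoint hD, h1, h2]
  · rw [Finset.biUnion_image]
  · intro b
    show ((paIdx b).image paPerm).card = 20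
    rw [Finset.card_image_of_injective _ paPerm_inj, paIdx_card]
  · intro a b hab
    refine (Finset.disjoint_image paPerm_inj).mpr ?_
    rw [Finset.disjoint_left]
    intro i hi hj
    simp only [paIdx, Finset.mem_filter, Finset.mem_univ, true_and] at hi hj
    exact hab (Fin.ext (hi.symm.trans hj))
  · intro a σ hσ τ hτ hne
    obtain ⟨i, hi, rfl⟩ := Finset.mem_image.mp hσ
    obtain ⟨j, hj, rfl⟩ := Finset.mem_image.mp hτ
    simp only [paIdx, Finset.mem_filter, Finset.mem_univ, true_and] at hi hj
    have := a.2
    have hij : i.val ≠ j.val := fun e => hne (congrArg paPerm (Fin.ext e))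
    rw [paPerm_dist, paBlock_chk i (by omega) j (by omega) hij, if_pos (hi.trans hj.symm)]
  · intro a b hab σ hσ τ hτ
    obtain ⟨i, hi, rfl⟩ := Finset.mem_image.mp hσ
    obtain ⟨j, hj, rfl⟩ := Finset.mem_image.mp hτ
    simp only [paIdx, Finset.mem_filter, Finset.mem_univ, true_and] at hi hj
    have := a.2
    have := b.2
    have hne : i.val / 20 ≠ j.val / 20 := fun e => hab (Fin.ext (hi.symm.trans (e.trans hj)))
    rw [paPerm_dist, paBlock_chk i (by omega) j (by omega) (fun e => hne (by rw [e])), if_neg hne]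
  · intro σ hσ τ hτ hne
    obtain ⟨i, hi, rfl⟩ := Finset.mem_image.mp hσ
    obtain ⟨j, hj, rfl⟩ := Finset.mem_image.mp hτ
    simp only [paTail, Finset.mem_filter, Finset.mem_univ, true_and] at hi hj
    rw [paPerm_dist]
    exact paTail_chk i i.2 j j.2 hi hj (fun e => hne (congrArg paPerm (Fin.ext e)))
  · intro σ hσ τ hτ hne
    rw [← Finset.image_union] at hσ hτ
    obtain ⟨i, hi, rfl⟩ := Finset.mem_image.mp hσ
    obtain ⟨j, hj, rfl⟩ := Finset.mem_image.mp hτ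
    rw [paPerm_dist]
    exact paAll_chk i i.2 j j.2 (fun e => hne (congrArg paPerm (Fin.ext e)))
end
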